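/- arXiv:2311.11663 — 3 statements merged into one kernel-verified Lean document; each statement's English description precedes it below -/
import Mathlib

section
/- Let D be a v-CNF over m variables with v ≥ 1, let w > 0, and suppose Pr[D(U^{1/3}_m) = 1] ≥ 2^{−w} and w·4^v ≤ m. Then there exists a restriction ρ on m variables with Free(ρ) = m' = m − w·4^v such that: (1) the restricted function D_ρ : {0,1}^{m'} → {0,1} is computable by a (v−1)-CNF over m' variables; (2) Pr[D_ρ(U_{m'}) = 1] ≤ Pr[D(U_m) = 1] · 2^{w·4^v}; and (3) Pr[D_ρ(U^{1/3}_{m'}) = 1] ≥ Pr[D(U^{1/3}_m) = 1]. -/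
open scoped BigOperators

attribute [local instance] Classical.propDecidable

noncomputable section

/-- Probability that a uniformly random element of a finite type satisfies `P`. -/
def uPr {X : Type*} [Fintype X] (P : X → Prop) : ℝ :=
  (Fintype.card {x : X // P x} : ℝ) / (Fintype.card X : ℝ)

/-- Probability of `P` under `t` i.i.d. bits, each equal to `true` with probability `p`. -/
def bPr {t : ℕ} (p : ℝ) (P : (Fin t → Bool) → Prop) : ℝ :=
  ∑ x : Fin t → Bool, if P x then (∏ i, if x i then p else 1 - p) else 0

/-- An adaptive `q`-query oracle procedure with input set `I` and query set `Q`. -/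
structure OracleProc (q : ℕ) (I : Type*) (Q : Type*) where
  qry : (i : Fin q) → I → (Fin i.val → Bool) → Q
  out : I → (Fin q → Bool) → Bool

/-- The answer to the `i`-th query when running with oracle `D` on input `w`. -/
def OracleProc.ans {q : ℕ} {I Q : Type*} (P : OracleProc q I Q) (D : Q → Bool) (w : I)
    (i : Fin q) : Bool :=
  D (P.qry i w (fun j => P.ans D w ⟨j.val, j.isLt.trans i.isLt⟩))
termination_by i.val
decreasing_by exact j.isLt

/-- The output of the oracle procedure, with oracle `D`, on input `w`. -/
def OracleProc.run {q : ℕ} {I Q : Type*} (P : OracleProc q I Q) (D : Q → Bool) (w : I) : Bool :=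
  P.out w (P.ans D w)

/-- A clause over `n` Boolean variables: a list of literals (variable, polarity). -/
abbrev BClause (n : ℕ) := List (Fin n × Bool)

/-- A CNF over `n` Boolean variables: a list of clauses. -/
abbrev BCNF (n : ℕ) := List (BClause n)

def BClause.eval {n : ℕ} (c : BClause n) (x : Fin n → Bool) : Bool :=
  c.any (fun l => x l.1 == l.2)

def BCNF.eval {n : ℕ} (φ : BCNF n) (x : Fin n → Bool) : Bool :=
  φ.all (fun c => BClause.eval c x)

/-- A `q`-CNF: every clause has at most `q` literals. -/
def BCNF.width {n : ℕ} (φ : BCNF n) (q : ℕ) : Prop :=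
  ∀ c ∈ φ, c.length ≤ q

/-- Hamming weight. -/
def wt {n : ℕ} (x : Fin n → Bool) : ℕ :=
  (Finset.univ.filter (fun i => x i = true)).card

/-- The set of free (`*`) positions of a restriction. -/
def freeSet {n : ℕ} (ρ : Fin n → Option Bool) : Finset (Fin n) :=
  Finset.univ.filter (fun i => ρ i = none)

/-- The number of free positions of a restriction. -/
def freeCount {n : ℕ} (ρ : Fin n → Option Bool) : ℕ := (freeSet ρ).card

/-- Fill the free positions of a restriction `ρ` with the bits of `x`, in order. -/
def Fill {n t : ℕ} (ρ : Fin n → Option Bool) (h : freeCount ρ = t)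
    (x : Fin t → Bool) : Fin n → Bool := fun i =>
  if hm : i ∈ freeSet ρ then x (((freeSet ρ).orderIsoOfFin h).symm ⟨i, hm⟩)
  else (ρ i).getD false

/-- The restrictions on `n` variables with exactly `t` free positions. -/
abbrev Restr (n t : ℕ) := {ρ : Fin n → Option Bool // freeCount ρ = t}

/-- Relative Hamming distance. -/
def relDist {n : ℕ} (x y : Fin n → Bool) : ℝ :=
  ((Finset.univ.filter (fun i => x i ≠ y i)).card : ℝ) / n

end

/-!
Choose greedily a maximal family of falsifiable clauses of `D` on pairwise disjoint sets of
variables, and let `S` be the set of all variables they use. Disjoint clauses are independent, and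
a falsifiable clause on `k ≤ v` variables is false with probability at least `3⁻ᵏ`, hence true with
probability at most `1 - 3⁻ᵏ ≤ 2 ^ (-k / 4ᵛ)`. So `D` is true with probability at most
`2 ^ (-|S| / 4ᵛ)`, which forces `|S| ≤ w * 4ᵛ`. By maximality every nonempty falsifiable clause has
a variable in `S`; fixing a set `T ⊇ S` of exactly `w * 4ᵛ` variables therefore shortens every
clause that does not become true. Averaging over the biased values of the variables in `T` gives an
assignment that does not decrease the biased acceptance probability, and the uniform acceptance
probability grows at most by the factor `2 ^ |T|`, since filling in the free positions is injective.
-/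

open Finset

variable {n t v : ℕ} {p δ : ℝ}

section BiasedBits

/-- The probability that a bit of bias `p` takes the value `b`. -/
noncomputable def bitWeight (p : ℝ) (b : Bool) : ℝ := if b then p else 1 - p

lemma bPr_eq_sum_filter (p : ℝ) (P : (Fin n → Bool) → Prop) [DecidablePred P] :
    bPr p P = ∑ x with P x, ∏ i, bitWeight p (x i) := by
  rw [sum_filter]
  exact sum_congr rfl fun x _ ↦ by congr

lemma sum_bitWeight (p : ℝ) : ∑ b, bitWeight p b = 1 := by
  simp [bitWeight]

lemma sum_prod_bitWeight (p : ℝ) : ∑ x : Fin n → Bool, ∏ i, bitWeight p (x i) = 1 := by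
  simp_rw [← Fintype.prod_sum, sum_bitWeight, prod_const_one]

lemma le_bitWeight (h₀ : δ ≤ p) (h₁ : p ≤ 1 - δ) (b : Bool) : δ ≤ bitWeight p b := by
  cases b <;> simp only [bitWeight, Bool.false_eq_true, if_true, if_false] <;> linarith

lemma prod_bitWeight_nonneg (h₀ : 0 ≤ p) (h₁ : p ≤ 1) (x : Fin n → Bool) :
    0 ≤ ∏ i, bitWeight p (x i) :=
  prod_nonneg fun i _ ↦ le_bitWeight h₀ (by linarith) (x i)

lemma bPr_nonneg (h₀ : 0 ≤ p) (h₁ : p ≤ 1) (P : (Fin n → Bool) → Prop) : 0 ≤ bPr p P := by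
  rw [bPr_eq_sum_filter]
  exact sum_nonneg fun x _ ↦ prod_bitWeight_nonneg h₀ h₁ x

lemma bPr_mono (h₀ : 0 ≤ p) (h₁ : p ≤ 1) {P Q : (Fin n → Bool) → Prop} (hPQ : ∀ x, P x → Q x) :
    bPr p P ≤ bPr p Q := by
  simp only [bPr_eq_sum_filter]
  exact sum_le_sum_of_subset_of_nonneg (monotone_filter_right _ fun x _ ↦ hPQ x)
    fun x _ _ ↦ prod_bitWeight_nonneg h₀ h₁ x

lemma bPr_const_true (p : ℝ) : bPr p (fun _ : Fin n → Bool ↦ True) = 1 := by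
  rw [bPr_eq_sum_filter, filter_true, sum_prod_bitWeight]

lemma bPr_const_false (p : ℝ) : bPr p (fun _ : Fin n → Bool ↦ False) = 0 := by
  rw [bPr_eq_sum_filter, filter_false, sum_empty]

lemma bPr_not (p : ℝ) (P : (Fin n → Bool) → Prop) : bPr p (fun x ↦ ¬ P x) = 1 - bPr p P := by
  rw [eq_sub_iff_add_eq, ← sum_prod_bitWeight (n := n) p, bPr_eq_sum_filter, bPr_eq_sum_filter,
    sum_filter_not_add_sum_filter]

lemma bPr_forall_mem_eq (p : ℝ) (A : Finset (Fin n)) (y : Fin n → Bool) :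
    bPr p (fun x ↦ ∀ i ∈ A, x i = y i) = ∏ i ∈ A, bitWeight p (y i) := by
  have cylinder_eq_piFinset : (univ.filter fun x : Fin n → Bool ↦ ∀ i ∈ A, x i = y i) =
      Fintype.piFinset fun i ↦ if i ∈ A then {y i} else univ := by
    ext x
    simp only [mem_filter_univ, Fintype.mem_piFinset]
    refine forall_congr' fun i ↦ ?_
    by_cases hi : i ∈ A <;> simp [hi]
  rw [bPr_eq_sum_filter, cylinder_eq_piFinset, ← prod_univ_sum,
    ← prod_subset (subset_univ A) fun i _ hi ↦ by simp only [hi, if_false, sum_bitWeight]]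
  exact prod_congr rfl fun i hi ↦ by simp only [hi, if_true, sum_singleton]

lemma bPr_comp_embedding (p : ℝ) (e : Fin t ↪ Fin n) (P : (Fin t → Bool) → Prop) :
    bPr p (fun x ↦ P (x ∘ e)) = bPr p P := by
  have prob_comp_eq (z : Fin t → Bool) :
      ∑ x : Fin n → Bool with x ∘ e = z, ∏ i, bitWeight p (x i) = ∏ j, bitWeight p (z j) := by
    have comp_eq_iff (x : Fin n → Bool) :
        x ∘ e = z ↔ ∀ i ∈ univ.map e, x i = Function.extend e z (fun _ ↦ false) i := by
      simp [funext_iff, e.injective.extend_apply]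
    simp only [comp_eq_iff]
    rw [← bPr_eq_sum_filter, bPr_forall_mem_eq, prod_map]
    simp only [e.injective.extend_apply]
  calc bPr p (fun x ↦ P (x ∘ e))
      = ∑ z with P z, ∑ x : Fin n → Bool with x ∘ e = z, ∏ i, bitWeight p (x i) := by
        rw [bPr_eq_sum_filter, sum_fiberwise_eq_sum_filter]
        simp only [mem_filter_univ]
    _ = bPr p P := by simp only [prob_comp_eq, bPr_eq_sum_filter]

-- Exchanging the coordinates in `T` between two independent samples preserves their joint law.
lemma sum_prod_bitWeight_mul_bPr_piecewise (p : ℝ) (T : Finset (Fin n))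
    (P : (Fin n → Bool) → Prop) :
    ∑ a : Fin n → Bool, (∏ i, bitWeight p (a i)) * bPr p (fun x ↦ P (T.piecewise a x)) =
      bPr p P := by
  let exchange : (Fin n → Bool) × (Fin n → Bool) → (Fin n → Bool) × (Fin n → Bool) :=
    fun z ↦ (T.piecewise z.1 z.2, T.piecewise z.2 z.1)
  have exchange_involutive : Function.Involutive exchange := fun z ↦ by
    ext i <;> by_cases hi : i ∈ T <;> simp [exchange, hi]
  let weight (z : (Fin n → Bool) × (Fin n → Bool)) : ℝ :=
    (∏ i, bitWeight p (z.1 i)) * ∏ i, bitWeight p (z.2 i)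
  have weight_exchange (z : (Fin n → Bool) × (Fin n → Bool)) : weight (exchange z) = weight z := by
    simp only [weight, ← prod_mul_distrib]
    refine prod_congr rfl fun i _ ↦ ?_
    by_cases hi : i ∈ T <;> simp [exchange, hi, mul_comm]
  calc ∑ a : Fin n → Bool, (∏ i, bitWeight p (a i)) * bPr p (fun x ↦ P (T.piecewise a x))
      = ∑ z, if P (exchange z).1 then weight z else 0 := by
        simp only [bPr_eq_sum_filter, sum_filter, mul_sum, mul_ite, mul_zero,
          Fintype.sum_prod_type, exchange, weight]
    _ = ∑ z, if P (exchange z).1 then weight (exchange z) else 0 := by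
        simp only [weight_exchange]
    _ = ∑ z, if P z.1 then weight z else 0 :=
        exchange_involutive.bijective.sum_comp fun z ↦ if P z.1 then weight z else 0
    _ = bPr p P := by
        simp only [Fintype.sum_prod_type, weight, sum_ite_irrel, ← mul_sum, sum_prod_bitWeight,
          mul_one, sum_const_zero, bPr_eq_sum_filter, sum_filter]

lemma exists_bPr_le_bPr_piecewise (h₀ : 0 ≤ p) (h₁ : p ≤ 1) (T : Finset (Fin n))
    (P : (Fin n → Bool) → Prop) :
    ∃ a : Fin n → Bool, bPr p P ≤ bPr p (fun x ↦ P (T.piecewise a x)) := by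
  obtain ⟨a, ha⟩ := Finite.exists_max fun a ↦ bPr p (fun x ↦ P (T.piecewise a x))
  refine ⟨a, ?_⟩
  calc bPr p P
      = ∑ b : Fin n → Bool, (∏ i, bitWeight p (b i)) * bPr p (fun x ↦ P (T.piecewise b x)) :=
        (sum_prod_bitWeight_mul_bPr_piecewise p T P).symm
    _ ≤ ∑ b : Fin n → Bool, (∏ i, bitWeight p (b i)) * bPr p (fun x ↦ P (T.piecewise a x)) :=
        sum_le_sum fun b _ ↦ mul_le_mul_of_nonneg_left (ha b) (prod_bitWeight_nonneg h₀ h₁ b)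
    _ = bPr p (fun x ↦ P (T.piecewise a x)) := by rw [← sum_mul, sum_prod_bitWeight, one_mul]

lemma bPr_and_of_dependsOn (p : ℝ) {P Q : (Fin n → Bool) → Prop} {S T : Finset (Fin n)}
    (hP : DependsOn P S) (hQ : DependsOn Q T) (hST : Disjoint S T) :
    bPr p (fun x ↦ P x ∧ Q x) = bPr p P * bPr p Q := by
  have hP' (a x : Fin n → Bool) : P (S.piecewise a x) = P a :=
    hP fun i hi ↦ S.piecewise_eq_of_mem a x hi
  have hQ' (a x : Fin n → Bool) : Q (S.piecewise a x) = Q x :=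
    hQ fun i hi ↦ S.piecewise_eq_of_notMem a x (disjoint_right.1 hST hi)
  have section_and (a : Fin n → Bool) :
      bPr p (fun x ↦ P a ∧ Q x) = if P a then bPr p Q else 0 := by
    by_cases ha : P a <;> simp only [ha, true_and, false_and, if_true, if_false, bPr_const_false]
  rw [← sum_prod_bitWeight_mul_bPr_piecewise p S, bPr_eq_sum_filter p P, sum_mul, sum_filter]
  simp only [hP', hQ', section_and, mul_ite, mul_zero]

lemma pow_card_le_bPr_of_dependsOn (hδ : 0 ≤ δ) (h₀ : δ ≤ p) (h₁ : p ≤ 1 - δ)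
    {P : (Fin n → Bool) → Prop} {S : Finset (Fin n)} (hP : DependsOn P S) {y : Fin n → Bool}
    (hy : P y) : δ ^ #S ≤ bPr p P :=
  calc δ ^ #S = ∏ _i ∈ S, δ := (prod_const δ).symm
    _ ≤ ∏ i ∈ S, bitWeight p (y i) := prod_le_prod (fun _ _ ↦ hδ) fun i _ ↦ le_bitWeight h₀ h₁ (y i)
    _ = bPr p (fun x ↦ ∀ i ∈ S, x i = y i) := (bPr_forall_mem_eq p S y).symm
    _ ≤ bPr p P := bPr_mono (hδ.trans h₀) (by linarith) fun x hx ↦ (hP hx).symm ▸ hy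

end BiasedBits

section Clauses

namespace BClause

lemma eval_eq_true_iff {c : BClause n} {x : Fin n → Bool} :
    c.eval x = true ↔ ∃ l ∈ c, x l.1 = l.2 := by
  simp [eval]

lemma eval_eq_false_iff {c : BClause n} {x : Fin n → Bool} :
    c.eval x = false ↔ ∀ l ∈ c, x l.1 ≠ l.2 := by
  simp [eval]

/-- The set of variables occurring in a clause. -/
def vars (c : BClause n) : Finset (Fin n) := (c.map Prod.fst).toFinset

lemma fst_mem_vars {c : BClause n} {l : Fin n × Bool} (hl : l ∈ c) : l.1 ∈ c.vars :=
  List.mem_toFinset.2 (List.mem_map_of_mem hl)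

lemma card_vars_le_length (c : BClause n) : #c.vars ≤ c.length :=
  (List.toFinset_card_le _).trans_eq (List.length_map _)

lemma dependsOn_eval_eq_true (c : BClause n) : DependsOn (fun x ↦ c.eval x = true) c.vars :=
  fun x y hxy ↦ propext <| by
    simp only [eval_eq_true_iff]
    exact exists_congr fun l ↦ and_congr_right fun hl ↦ by rw [hxy l.1 (fst_mem_vars hl)]

lemma bPr_eval_le_one_sub_pow_card_vars (hδ : 0 ≤ δ) (h₀ : δ ≤ p) (h₁ : p ≤ 1 - δ)
    {c : BClause n} (hc : ∃ x, c.eval x = false) :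
    bPr p (fun x ↦ c.eval x = true) ≤ 1 - δ ^ #c.vars := by
  obtain ⟨y, hy⟩ := hc
  have dependsOn_not_eval : DependsOn (fun x ↦ ¬ c.eval x = true) c.vars :=
    fun _ _ hxz ↦ congrArg Not (c.dependsOn_eval_eq_true hxz)
  have := pow_card_le_bPr_of_dependsOn hδ h₀ h₁ dependsOn_not_eval (y := y) (by simp [hy])
  rw [bPr_not] at this
  linarith

end BClause

lemma BCNF.eval_eq_true_iff {D : BCNF n} {x : Fin n → Bool} :
    D.eval x = true ↔ ∀ c ∈ D, c.eval x = true := by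
  simp [BCNF.eval]

/-
`T` collects the variables of a maximal subfamily of falsifiable clauses on pairwise disjoint sets
of variables, chosen greedily; `E` is the conjunction of that subfamily.
-/
lemma BCNF.exists_finset_not_disjoint_vars_and_bPr_eval_le {β : ℝ} (h₀ : 0 ≤ p) (h₁ : p ≤ 1)
    (hβ : 0 ≤ β) (D : BCNF n)
    (hD : ∀ c ∈ D, (∃ x, c.eval x = false) → bPr p (fun x ↦ c.eval x = true) ≤ β ^ #c.vars) :
    ∃ T : Finset (Fin n),
      (∀ c ∈ D, (∃ x, c.eval x = false) → c ≠ [] → ¬ Disjoint c.vars T) ∧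
      bPr p (fun x ↦ D.eval x = true) ≤ β ^ #T := by
  suffices ∃ (T : Finset (Fin n)) (E : (Fin n → Bool) → Prop), DependsOn E T ∧
      (∀ x, D.eval x = true → E x) ∧ bPr p E ≤ β ^ #T ∧
      ∀ c ∈ D, (∃ x, c.eval x = false) → c ≠ [] → ¬ Disjoint c.vars T by
    obtain ⟨T, E, -, hDE, hE, hT⟩ := this
    exact ⟨T, hT, (bPr_mono h₀ h₁ hDE).trans hE⟩
  induction D with
  | nil => exact ⟨∅, fun _ ↦ True, fun _ _ _ ↦ rfl, by simp, by simp [bPr_const_true], by simp⟩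
  | cons c D ih =>
    simp only [List.forall_mem_cons] at hD ⊢
    obtain ⟨T, E, hET, hDE, hE, hT⟩ := ih hD.2
    have eval_cons {x : Fin n → Bool} (hx : BCNF.eval (c :: D) x = true) :
        c.eval x = true ∧ BCNF.eval D x = true := by
      simpa only [eval_eq_true_iff, List.forall_mem_cons] using hx
    by_cases hc : (∃ x, c.eval x = false) ∧ Disjoint c.vars T
    · obtain ⟨hcf, hcT⟩ := hc
      refine ⟨c.vars ∪ T, fun x ↦ c.eval x = true ∧ E x, fun x y hxy ↦ ?_,
        fun x hx ↦ ⟨(eval_cons hx).1, hDE x (eval_cons hx).2⟩, ?_, fun _ hc₀ ↦ ?_,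
        fun d hd hdf hd₀ hdT ↦ hT d hd hdf hd₀ (hdT.mono_right subset_union_right)⟩
      · exact congrArg₂ And (c.dependsOn_eval_eq_true fun i hi ↦ hxy i (mem_union_left T hi))
          (hET fun i hi ↦ hxy i (mem_union_right c.vars hi))
      · rw [bPr_and_of_dependsOn p c.dependsOn_eval_eq_true hET hcT, card_union_of_disjoint hcT,
          pow_add]
        exact mul_le_mul (hD.1 hcf) hE (bPr_nonneg h₀ h₁ E) (by positivity)
      · obtain ⟨l, hl⟩ := List.exists_mem_of_ne_nil c hc₀
        exact not_disjoint_iff.2 ⟨l.1, BClause.fst_mem_vars hl,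
          mem_union_left T (BClause.fst_mem_vars hl)⟩
    · exact ⟨T, E, hET, fun x hx ↦ hDE x (eval_cons hx).2, hE, fun hcf _ hcT ↦ hc ⟨hcf, hcT⟩, hT⟩

end Clauses

section Restrictions

variable {ρ : Fin n → Option Bool} {h : freeCount ρ = t}

lemma Fill_orderEmbOfFin (y : Fin t → Bool) (j : Fin t) :
    Fill ρ h y ((freeSet ρ).orderEmbOfFin h j) = y j := by
  have mem_freeSet := (freeSet ρ).orderEmbOfFin_mem h j
  rw [Fill, dif_pos mem_freeSet]
  exact congrArg y (((freeSet ρ).orderIsoOfFin h).symm_apply_apply j)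

lemma Fill_injective : Function.Injective (Fill ρ h) := fun y z hyz ↦ by
  ext j
  rw [← Fill_orderEmbOfFin (h := h) y, hyz, Fill_orderEmbOfFin]

lemma Fill_of_notMem_freeSet {i : Fin n} (hi : i ∉ freeSet ρ) (y z : Fin t → Bool) :
    Fill ρ h y i = Fill ρ h z i := by
  rw [Fill, Fill, dif_neg hi, dif_neg hi]

lemma Fill_comp_orderEmbOfFin (x : Fin n → Bool) :
    Fill ρ h (x ∘ (freeSet ρ).orderEmbOfFin h) =
      (freeSet ρ).piecewise x fun i ↦ (ρ i).getD false := by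
  ext i
  by_cases hi : i ∈ freeSet ρ
  · rw [Fill, dif_pos hi, piecewise_eq_of_mem _ _ _ hi]
    exact congrArg (fun j : {j // j ∈ freeSet ρ} ↦ x j)
      (((freeSet ρ).orderIsoOfFin h).apply_symm_apply ⟨i, hi⟩)
  · rw [Fill, dif_neg hi, piecewise_eq_of_notMem _ _ _ hi]

lemma bPr_Fill_eq_bPr_piecewise (p : ℝ) (P : (Fin n → Bool) → Prop) :
    bPr p (fun y : Fin t → Bool ↦ P (Fill ρ h y)) =
      bPr p (fun x ↦ P ((freeSet ρ).piecewise x fun i ↦ (ρ i).getD false)) := by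
  simp_rw [← bPr_comp_embedding p ((freeSet ρ).orderEmbOfFin h).toEmbedding,
    ← Fill_comp_orderEmbOfFin (h := h)]
  rfl

lemma exists_freeSet_eq_compl_and_bPr_le_bPr_Fill (h₀ : 0 ≤ p) (h₁ : p ≤ 1) (T : Finset (Fin n))
    (P : (Fin n → Bool) → Prop) :
    ∃ ρ : Fin n → Option Bool, freeSet ρ = Tᶜ ∧
      ∀ {t : ℕ} (h : freeCount ρ = t), bPr p P ≤ bPr p (fun y : Fin t → Bool ↦ P (Fill ρ h y)) := by
  obtain ⟨a, ha⟩ := exists_bPr_le_bPr_piecewise h₀ h₁ T P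
  let ρ : Fin n → Option Bool := T.piecewise (fun i ↦ some (a i)) fun _ ↦ none
  have freeSet_eq : freeSet ρ = Tᶜ := by
    ext i
    by_cases hi : i ∈ T <;> simp [freeSet, ρ, hi]
  refine ⟨ρ, freeSet_eq, fun h ↦ ha.trans_eq ?_⟩
  rw [bPr_Fill_eq_bPr_piecewise]
  congr! 3 with x
  ext i
  by_cases hi : i ∈ T <;> simp [freeSet_eq, ρ, hi]

lemma uPr_Fill_le (P : (Fin n → Bool) → Prop) :
    uPr (fun y : Fin t → Bool ↦ P (Fill ρ h y)) ≤ uPr P * 2 ^ (n - t) := by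
  have t_le_n : t ≤ n := h ▸ (card_le_univ _).trans_eq (Fintype.card_fin n)
  have card_le : Fintype.card {y // P (Fill ρ h y)} ≤ Fintype.card {x // P x} :=
    Fintype.card_le_of_injective (Subtype.map (Fill ρ h) fun _ hy ↦ hy)
      (Subtype.map_injective _ Fill_injective)
  have two_pow_eq : (2 : ℝ) ^ n = 2 ^ t * 2 ^ (n - t) := by
    rw [← pow_add, Nat.add_sub_cancel' t_le_n]
  simp only [uPr, Fintype.card_fun, Fintype.card_bool, Fintype.card_fin, Nat.cast_pow,
    Nat.cast_ofNat]
  rw [two_pow_eq, div_mul_eq_mul_div, mul_div_mul_right _ _ (by positivity)]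
  gcongr

namespace BClause

/-- The clause `c` under the restriction `ρ`: the literals on fixed variables are deleted and the
free variables renumbered. This computes `c` after the restriction only if no deleted literal is
satisfied, see `BClause.eval_restrict`. -/
noncomputable def restrict (ρ : Fin n → Option Bool) (h : freeCount ρ = t) (c : BClause n) :
    BClause t :=
  c.filterMap fun l ↦
    if hl : l.1 ∈ freeSet ρ then some (((freeSet ρ).orderIsoOfFin h).symm ⟨l.1, hl⟩, l.2) else none

lemma eval_restrict {c : BClause n} (hc : ∃ z, c.eval (Fill ρ h z) = false) (y : Fin t → Bool) :
    (c.restrict ρ h).eval y = c.eval (Fill ρ h y) := by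
  obtain ⟨z, hz⟩ := hc
  rw [Bool.eq_iff_iff, eval_eq_true_iff, eval_eq_true_iff]
  have mem_freeSet {l : Fin n × Bool} (hl : l ∈ c) (hly : Fill ρ h y l.1 = l.2) :
      l.1 ∈ freeSet ρ := by
    by_contra hlρ
    exact eval_eq_false_iff.1 hz l hl (Fill_of_notMem_freeSet hlρ z y ▸ hly)
  constructor
  · rintro ⟨l', hl', hly⟩
    obtain ⟨l, hl, hll'⟩ := List.mem_filterMap.1 hl'
    split_ifs at hll' with hlρ
    obtain rfl := Option.some.inj hll'
    exact ⟨l, hl, by rwa [Fill, dif_pos hlρ]⟩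
  · rintro ⟨l, hl, hly⟩
    have hlρ := mem_freeSet hl hly
    refine ⟨_, List.mem_filterMap.2 ⟨l, hl, dif_pos hlρ⟩, ?_⟩
    rwa [Fill, dif_pos hlρ] at hly

lemma length_restrict_lt {c : BClause n} (hc : ¬ Disjoint c.vars (freeSet ρ)ᶜ) :
    (c.restrict ρ h).length < c.length := by
  obtain ⟨i, hic, hiρ⟩ := not_disjoint_iff.1 hc
  obtain ⟨l, hl, rfl⟩ := List.mem_map.1 (List.mem_toFinset.1 hic)
  exact List.length_filterMap_lt_length_iff_exists.2 ⟨l, hl, dif_neg (mem_compl.1 hiρ)⟩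

end BClause

namespace BCNF

/-- The CNF `D` under the restriction `ρ`: clauses that became identically true are dropped. -/
noncomputable def restrict (ρ : Fin n → Option Bool) (h : freeCount ρ = t) (D : BCNF n) : BCNF t :=
  (D.filter fun c ↦ ∃ z, c.eval (Fill ρ h z) = false).map (BClause.restrict ρ h)

lemma eval_restrict (D : BCNF n) (y : Fin t → Bool) :
    (D.restrict ρ h).eval y = D.eval (Fill ρ h y) := by
  rw [Bool.eq_iff_iff, eval_eq_true_iff, eval_eq_true_iff]
  simp only [restrict, List.forall_mem_map, List.mem_filter, decide_eq_true_eq]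
  refine ⟨fun hD c hc ↦ ?_, fun hD c hc ↦ ?_⟩
  · by_contra hcy
    rw [Bool.not_eq_true] at hcy
    exact absurd (hD c ⟨hc, y, hcy⟩) (by rw [BClause.eval_restrict ⟨y, hcy⟩, hcy]; decide)
  · rw [BClause.eval_restrict hc.2]
    exact hD c hc.1

lemma width_restrict {D : BCNF n} (hwidth : D.width (v + 1))
    (hD : ∀ c ∈ D, (∃ x, c.eval x = false) → c ≠ [] → ¬ Disjoint c.vars (freeSet ρ)ᶜ) :
    (D.restrict ρ h).width v := by
  simp only [width, restrict, List.forall_mem_map, List.mem_filter, decide_eq_true_eq]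
  rintro c ⟨hcD, z, hz⟩
  rcases eq_or_ne c [] with rfl | hc
  · exact Nat.zero_le _
  · have := BClause.length_restrict_lt (h := h) (hD c hcD ⟨_, hz⟩ hc)
    exact Nat.lt_succ_iff.1 (this.trans_le (hwidth c hcD))

end BCNF

end Restrictions

section Numerics

lemma seven_mul_mul_three_pow_le (k : ℕ) : 7 * k * 3 ^ k ≤ 10 * 4 ^ k := by
  rcases lt_or_ge k 3 with hk | hk
  · interval_cases k <;> norm_num
  · induction k, hk using Nat.le_induction with
    | base => norm_num
    | succ k hk ih =>
      calc 7 * (k + 1) * 3 ^ (k + 1) = 7 * 3 ^ k * (3 * k + 3) := by ring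
        _ ≤ 7 * 3 ^ k * (4 * k) := by gcongr; lia
        _ = 4 * (7 * k * 3 ^ k) := by ring
        _ ≤ 4 * (10 * 4 ^ k) := by gcongr
        _ = 10 * 4 ^ (k + 1) := by ring

lemma one_sub_one_third_pow_le {k : ℕ} (hk : k ≤ v) :
    1 - (1 / 3 : ℝ) ^ k ≤ ((2 : ℝ) ^ (-((4 ^ v : ℕ) : ℝ)⁻¹)) ^ k := by
  have log_two_mul_le : Real.log 2 * k / (4 ^ v : ℕ) ≤ (1 / 3) ^ k := by
    have seven_mul_mul_three_pow_le_four_pow : (7 * k * 3 ^ k : ℝ) ≤ 10 * 4 ^ v :=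
      mod_cast (seven_mul_mul_three_pow_le k).trans (by gcongr; norm_num)
    have log_two_le : Real.log 2 ≤ 7 / 10 := Real.log_two_lt_d9.le.trans (by norm_num)
    calc Real.log 2 * k / (4 ^ v : ℕ) ≤ 7 / 10 * k / (4 ^ v : ℕ) := by gcongr
      _ ≤ (1 / 3) ^ k := by
        push_cast
        rw [one_div_pow, div_le_div_iff₀ (by positivity) (by positivity)]
        linarith
  calc 1 - (1 / 3 : ℝ) ^ k ≤ Real.exp (-(1 / 3) ^ k) := Real.one_sub_le_exp_neg _
    _ ≤ Real.exp (-(Real.log 2 * k / (4 ^ v : ℕ))) := by gcongr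
    _ = ((2 : ℝ) ^ (-((4 ^ v : ℕ) : ℝ)⁻¹)) ^ k := by
      rw [Real.rpow_def_of_pos two_pos, ← Real.exp_nat_mul]
      ring_nf

lemma le_mul_of_two_rpow_neg_le {w k N : ℕ} (hN : 0 < N)
    (hk : (2 : ℝ) ^ (-(w : ℝ)) ≤ ((2 : ℝ) ^ (-(N : ℝ)⁻¹)) ^ k) : k ≤ w * N := by
  rw [← Real.rpow_mul_natCast zero_le_two, Real.rpow_le_rpow_left_iff one_lt_two, neg_mul,
    neg_le_neg_iff, inv_mul_le_iff₀ (Nat.cast_pos.2 hN), mul_comm] at hk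
  exact_mod_cast hk

end Numerics

theorem width_reduction_by_restriction_general (m v w : ℕ) (D : BCNF m) {p : ℝ}
    (h₀ : 1 / 3 ≤ p) (h₁ : p ≤ 2 / 3) (hwidth : D.width (v + 1))
    (hpr : (2 : ℝ) ^ (-(w : ℝ)) ≤ bPr p (fun x ↦ D.eval x = true))
    (hm : w * 4 ^ (v + 1) ≤ m) :
    ∃ (ρ : Fin m → Option Bool) (h : freeCount ρ = m - w * 4 ^ (v + 1)),
      (∃ D' : BCNF (m - w * 4 ^ (v + 1)), D'.width v ∧ ∀ x, D'.eval x = D.eval (Fill ρ h x)) ∧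
      uPr (fun x ↦ D.eval (Fill ρ h x) = true) ≤
        uPr (fun x ↦ D.eval x = true) * (2 : ℝ) ^ (w * 4 ^ (v + 1)) ∧
      bPr p (fun x ↦ D.eval x = true) ≤ bPr p (fun x ↦ D.eval (Fill ρ h x) = true) := by
  have p_nonneg : 0 ≤ p := by linarith
  have p_le_one : p ≤ 1 := by linarith
  obtain ⟨S, hS, bPr_le⟩ := BCNF.exists_finset_not_disjoint_vars_and_bPr_eval_le
    (β := (2 : ℝ) ^ (-((4 ^ (v + 1) : ℕ) : ℝ)⁻¹)) p_nonneg p_le_one (by positivity) D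
    fun c hcD hc ↦ (BClause.bPr_eval_le_one_sub_pow_card_vars (by norm_num) h₀ (by linarith)
      hc).trans (one_sub_one_third_pow_le (c.card_vars_le_length.trans (hwidth c hcD)))
  have card_S_le : #S ≤ w * 4 ^ (v + 1) :=
    le_mul_of_two_rpow_neg_le (by positivity) (hpr.trans bPr_le)
  obtain ⟨T, hST, -, card_T⟩ := exists_subsuperset_card_eq (subset_univ S) card_S_le (by simpa)
  obtain ⟨ρ, freeSet_eq, bPr_le_bPr_Fill⟩ :=
    exists_freeSet_eq_compl_and_bPr_le_bPr_Fill p_nonneg p_le_one T fun x ↦ D.eval x = true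
  have freeCount_eq : freeCount ρ = m - w * 4 ^ (v + 1) := by
    rw [freeCount, freeSet_eq, card_compl, card_T, Fintype.card_fin]
  refine ⟨ρ, freeCount_eq, ⟨D.restrict ρ freeCount_eq, BCNF.width_restrict hwidth ?_,
    D.eval_restrict⟩, ?_, bPr_le_bPr_Fill freeCount_eq⟩
  · intro c hcD hc hc₀ hcT
    rw [freeSet_eq, compl_compl] at hcT
    exact hS c hcD hc hc₀ (hcT.mono_right hST)
  · simpa only [Nat.sub_sub_self hm] using uPr_Fill_le (h := freeCount_eq) fun x ↦ D.eval x = true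

/-- Lemma 4.10: a `v`-CNF that is non-negligibly often one on `1/3`-biased inputs admits a
restriction fixing `w·4^v` variables that reduces its width while roughly preserving its
acceptance probabilities. -/
theorem width_reduction_by_restriction (m v w : ℕ) (D : BCNF m)
    (hv : v ≥ 1) (hw : w > 0)
    (hwid : BCNF.width D v)
    (hpr : bPr (1 / 3) (fun x : Fin m → Bool => BCNF.eval D x = true) ≥
        (2 : ℝ) ^ (-(w : ℝ)))
    (hm : w * 4 ^ v ≤ m) :
    ∃ (ρ : Fin m → Option Bool) (h : freeCount ρ = m - w * 4 ^ v),
      (∃ D' : BCNF (m - w * 4 ^ v), BCNF.width D' (v - 1) ∧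
          ∀ x : Fin (m - w * 4 ^ v) → Bool, BCNF.eval D' x = BCNF.eval D (Fill ρ h x)) ∧
      uPr (fun x : Fin (m - w * 4 ^ v) → Bool => BCNF.eval D (Fill ρ h x) = true) ≤
          uPr (fun x : Fin m → Bool => BCNF.eval D x = true) * (2 : ℝ) ^ (w * 4 ^ v) ∧
      bPr (1 / 3) (fun x : Fin (m - w * 4 ^ v) → Bool => BCNF.eval D (Fill ρ h x) = true) ≥
          bPr (1 / 3) (fun x : Fin m → Bool => BCNF.eval D x = true) := by
  obtain ⟨k, rfl⟩ := Nat.exists_eq_add_of_le' hv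
  exact width_reduction_by_restriction_general m k w D le_rfl (by norm_num) hwid hpr hm
end

section
/- There exists a constant c > 0 such that the following holds. For every ℓ, every Δ ≥ 0, every set A ⊆ Func_{ℓ,1} with |A| ≥ 2^{2^ℓ − Δ}, and every function C : {0,1}^ℓ → {0,1}: Pr_{F uniform in A, X uniform in {0,1}^ℓ}[C(X) = F(X)] ≤ 1/2 + c·√((Δ + ℓ)/2^ℓ). -/
open scoped BigOperators

attribute [local instance] Classical.propDecidable

/-!
Let `N` be the size of the domain and let `Z F` be the number of agreements minus the number of
disagreements of `C` with `F`. For uniform `F`, `Z F` is a sum of `N` independent signs, so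
`exp (t * Z F)` has mean `cosh t ^ N ≤ exp (N * t ^ 2 / 2)`. Restricting to a set `A` of density at
least `2 ^ (-Δ)` multiplies this mean by at most `2 ^ Δ`, so by Jensen's inequality the mean `m` of
`Z` over `A` satisfies `t * m ≤ Δ * log 2 + N * t ^ 2 / 2` for every real `t`. The
difference of the two sides is quadratic in `t` and never changes sign, so its discriminant is
nonpositive, that is, `m ^ 2 ≤ 2 * N * Δ * log 2`.
-/

open Finset Real

lemma card_mul_exp_expect_le_sum_exp {ι : Type*} [Fintype ι] (s : Finset ι) (f : ι → ℝ) :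
    #s * exp (𝔼 i ∈ s, f i) ≤ ∑ i, exp (f i) := by
  obtain rfl | hs := s.eq_empty_or_nonempty
  · simpa only [card_empty, Nat.cast_zero, zero_mul] using sum_nonneg fun i _ => (exp_pos (f i)).le
  have hcard : (0 : ℝ) < #s := Nat.cast_pos.2 hs.card_pos
  have jensen : exp (𝔼 i ∈ s, f i) ≤ 𝔼 i ∈ s, exp (f i) := by
    have h := convexOn_exp.map_sum_le (t := s) (w := fun _ => (#s : ℝ)⁻¹) (p := f)
      (fun _ _ => by positivity) (by simp [hcard.ne']) (fun _ _ => Set.mem_univ _)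
    simpa only [expect_eq_sum_div_card, smul_eq_mul, ← mul_sum, div_eq_inv_mul] using h
  calc #s * exp (𝔼 i ∈ s, f i) ≤ #s * 𝔼 i ∈ s, exp (f i) := by gcongr
    _ = ∑ i ∈ s, exp (f i) := card_mul_expect s _
    _ ≤ ∑ i, exp (f i) := sum_le_univ_sum_of_nonneg fun i => (exp_pos (f i)).le

section Correlation

variable {X : Type*} [Fintype X]

/-- The (unnormalized) correlation of two Boolean functions: the number of points at which they
agree minus the number of points at which they differ. -/
noncomputable def correlation (C F : X → Bool) : ℝ :=
  ∑ x, if C x = F x then 1 else -1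

lemma card_agreement_eq (C F : X → Bool) :
    (#{x | C x = F x} : ℝ) = (Fintype.card X + correlation C F) / 2 := by
  have sign_eq (x : X) :
      (if C x = F x then (1 : ℝ) else -1) = 2 * (if C x = F x then 1 else 0) - 1 := by
    split_ifs <;> norm_num
  simp only [correlation, sign_eq, sum_sub_distrib, ← mul_sum, sum_boole, sum_const, card_univ,
    nsmul_eq_mul, mul_one]
  ring

lemma sum_card_agreement_eq (A : Finset (X → Bool)) (C : X → Bool) :
    ∑ F ∈ A, (#{x | C x = F x} : ℝ) =
      #A * (Fintype.card X + 𝔼 F ∈ A, correlation C F) / 2 := by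
  simp only [card_agreement_eq, ← sum_div, sum_add_distrib, sum_const, nsmul_eq_mul, mul_add,
    card_mul_expect]

lemma sum_exp_mul_correlation (C : X → Bool) (t : ℝ) :
    ∑ F, exp (t * correlation C F) = (2 * cosh t) ^ Fintype.card X := by
  have sum_sign (c : Bool) : ∑ b, exp (t * if c = b then 1 else -1) = 2 * cosh t := by
    rw [Fintype.sum_bool, cosh_eq]
    cases c <;> simp only [reduceIte, reduceCtorEq, mul_one, mul_neg] <;> ring
  calc ∑ F, exp (t * correlation C F)
      = ∑ F : X → Bool, ∏ x, exp (t * if C x = F x then 1 else -1) := by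
        simp only [correlation, mul_sum, exp_sum]
    _ = ∏ x, ∑ b, exp (t * if C x = b then 1 else -1) := by
        rw [prod_univ_sum, Fintype.piFinset_univ]
    _ = (2 * cosh t) ^ Fintype.card X := by
        simp only [sum_sign, prod_const, card_univ]

lemma sum_exp_mul_correlation_le (C : X → Bool) (t : ℝ) :
    ∑ F, exp (t * correlation C F) ≤ exp (Fintype.card X * (log 2 + t ^ 2 / 2)) := by
  rw [sum_exp_mul_correlation, exp_nat_mul, exp_add, exp_log two_pos]
  gcongr
  exact cosh_le_exp_half_sq t

variable {A : Finset (X → Bool)} {Δ : ℝ}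

lemma mul_expect_correlation_le (hA : (2 : ℝ) ^ (Fintype.card X - Δ) ≤ #A) (C : X → Bool)
    (t : ℝ) :
    t * 𝔼 F ∈ A, correlation C F ≤ Δ * log 2 + Fintype.card X * (t ^ 2 / 2) := by
  have exp_le : exp (log 2 * (Fintype.card X - Δ) + t * 𝔼 F ∈ A, correlation C F) ≤
      exp (Fintype.card X * (log 2 + t ^ 2 / 2)) :=
    calc exp (log 2 * (Fintype.card X - Δ) + t * 𝔼 F ∈ A, correlation C F)
        = 2 ^ (Fintype.card X - Δ) * exp (𝔼 F ∈ A, t * correlation C F) := by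
          rw [exp_add, ← rpow_def_of_pos two_pos, mul_expect]
      _ ≤ #A * exp (𝔼 F ∈ A, t * correlation C F) := by gcongr
      _ ≤ ∑ F, exp (t * correlation C F) := card_mul_exp_expect_le_sum_exp A _
      _ ≤ exp (Fintype.card X * (log 2 + t ^ 2 / 2)) := sum_exp_mul_correlation_le C t
  linarith [exp_le_exp.1 exp_le]

lemma sq_expect_correlation_le (hA : (2 : ℝ) ^ (Fintype.card X - Δ) ≤ #A) (C : X → Bool) :
    (𝔼 F ∈ A, correlation C F) ^ 2 ≤ 2 * Fintype.card X * (Δ * log 2) := by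
  have discrim_nonpos :
      discrim (Fintype.card X / 2 : ℝ) (-𝔼 F ∈ A, correlation C F) (Δ * log 2) ≤ 0 :=
    discrim_le_zero fun t => by linarith [mul_expect_correlation_le hA C t]
  rw [discrim] at discrim_nonpos
  linarith

theorem no_good_approximator_for_large_sets_general [Nonempty X]
    (hA : (2 : ℝ) ^ (Fintype.card X - Δ) ≤ #A) (C : X → Bool) :
    (∑ F ∈ A, (#{x | C x = F x} : ℝ)) / (#A * Fintype.card X) ≤
      1 / 2 + √(log 2 / 2) * √(Δ / Fintype.card X) := by
  set N : ℝ := (Fintype.card X : ℝ)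
  set m := 𝔼 F ∈ A, correlation C F
  have hN : 0 < N := Nat.cast_pos.2 Fintype.card_pos
  have hA_pos : (0 : ℝ) < #A := (rpow_pos_of_pos two_pos _).trans_le hA
  have mean_eq : (∑ F ∈ A, (#{x | C x = F x} : ℝ)) / (#A * N) = 1 / 2 + m / (2 * N) :=
    calc (∑ F ∈ A, (#{x | C x = F x} : ℝ)) / (#A * N)
        = #A * (N + m) / 2 / (#A * N) := by rw [sum_card_agreement_eq]
      _ = 1 / 2 + m / (2 * N) := by field_simp
  have bias_le : m / (2 * N) ≤ √(log 2 / 2 * (Δ / N)) := by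
    refine le_sqrt_of_sq_le ?_
    calc (m / (2 * N)) ^ 2 = m ^ 2 / (2 * N) ^ 2 := div_pow _ _ _
      _ ≤ 2 * N * (Δ * log 2) / (2 * N) ^ 2 := by
          gcongr
          exact sq_expect_correlation_le hA C
      _ = log 2 / 2 * (Δ / N) := by field_simp
  rw [mean_eq, ← sqrt_mul (by positivity)]
  gcongr

end Correlation

/-- Claim 3.13: no single function `C` agrees well on average with a random function drawn
from a large set `A` of functions. -/
theorem no_good_approximator_for_large_sets :
    ∃ c : ℝ, c > 0 ∧
      ∀ (ℓ : ℕ) (Δ : ℝ) (A : Finset ((Fin ℓ → Bool) → Bool)) (C : (Fin ℓ → Bool) → Bool),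
        Δ ≥ 0 →
        (A.card : ℝ) ≥ (2 : ℝ) ^ ((2 : ℝ) ^ (ℓ : ℕ) - Δ) →
        (∑ F ∈ A, ((Finset.univ.filter (fun x : Fin ℓ → Bool => C x = F x)).card : ℝ)) /
            ((A.card : ℝ) * 2 ^ ℓ) ≤
          1 / 2 + c * Real.sqrt ((Δ + (ℓ : ℝ)) / 2 ^ ℓ) := by
  refine ⟨√(log 2 / 2), by positivity, fun ℓ Δ A C _ hA => ?_⟩
  have h := no_good_approximator_for_large_sets_general (A := A) (Δ := Δ) (by simpa using hA) C
  rw [Fintype.card_fun, Fintype.card_bool, Fintype.card_fin, Nat.cast_pow, Nat.cast_ofNat] at h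
  exact h.trans (by gcongr; exact le_add_of_nonneg_right ℓ.cast_nonneg)
end

section
/- Let Enc : {0,1}^k → {0,1}^n with k a power of two, write ℓ = log₂ k, let 0 < p ≤ 1 with p·n an integer, and let a = ⌈log₂ L⌉ + 100. Suppose D̄ is an adaptive q-query oracle procedure with query set [n] and input set [k] × [L] such that: with probability at least 0.51 over choosing m uniform in {0,1}^k and ρ ∼ Rest^n_p independently, with probability at least 0.01 over z ∼ U^{1/3}_{p·n}, setting w = Enc(m) ⊕ Fill_ρ(z), there exists j ∈ [L] such that D̄^w(i, j) = m_i for every i ∈ [k]. Then for every α ∈ {0,1}^a there exists a q-CNF C^α over n variables such that C = ⋁_{α ∈ {0,1}^a} C^α satisfies: (1) Pr[C(U_n) = 1] ≤ 2^{−(2^ℓ − a)}; and (2) Pr_{ρ∼Rest^n_p}[ Pr_{z∼U^{1/3}_{p·n}}[C(Fill_ρ(z)) = 1] ≥ 0.01 ] ≥ 0.01. -/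
open scoped BigOperators

attribute [local instance] Classical.propDecidable

/-!
Encode the decoder's success on a fixed message `m` as an OR over list positions `j`: "the `j`-th
output is `m`" says that no transcript with a wrong output bit is the actual one, and each such
exclusion is a clause in the at most `q` queried bits of `w = Enc m ⊕ x`, hence also of `x`.

For uniform `x` the word `w` is uniform whatever `m` is, so averaging over `m` first, each `w`
decodes to at most `L` of the `2 ^ k` messages. Thus the OR for `m` accepts with probability at
most `L / 2 ^ k` on average over `m`. Averaging (success at `m`) minus `2 ^ k / 2 ^ a` times
(acceptance at `m`) then produces one message for which the former is large and the latter small.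
-/

section UniformProbability

open Finset

variable {X Y : Type*} [Fintype X] [Fintype Y]

theorem uPr_nonneg (P : X → Prop) : 0 ≤ uPr P := by
  unfold uPr
  positivity

theorem uPr_le_one (P : X → Prop) : uPr P ≤ 1 :=
  div_le_one_of_le₀ (mod_cast Fintype.card_subtype_le P) (Nat.cast_nonneg _)

theorem uPr_eq_expect (P : X → Prop) : uPr P = 𝔼 x, if P x then (1 : ℝ) else 0 := by
  rw [Fintype.expect_eq_sum_div_card, sum_boole, uPr, Fintype.card_subtype]

theorem uPr_prod (P : X × Y → Prop) : uPr P = 𝔼 x, uPr fun y => P (x, y) := by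
  simp only [uPr_eq_expect, ← univ_product_univ, expect_product]

theorem expect_uPr_comm (P : X → Y → Prop) :
    𝔼 x, uPr (fun y => P x y) = 𝔼 y, uPr fun x => P x y := by
  simp only [uPr_eq_expect]
  exact expect_comm _ _ _

theorem uPr_comp_equiv (e : X ≃ Y) (P : Y → Prop) : uPr (fun x => P (e x)) = uPr P := by
  unfold uPr
  rw [Fintype.card_congr e, Fintype.card_congr (e.subtypeEquiv fun _ => Iff.rfl)]

theorem uPr_exists_eq_le (f : X → Y) :
    uPr (fun y => ∃ x, f x = y) ≤ Fintype.card X / Fintype.card Y := by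
  rw [uPr, Fintype.card_subtype, univ_filter_exists]
  gcongr
  exact card_image_le

end UniformProbability

section ListDecoding

open Finset

variable {M X R J : Type*} [Fintype M] [Fintype X] [Fintype R] [Fintype J]

theorem expect_uPr_exists_eq_le [Nonempty X] (σ : M → Equiv.Perm X) (dec : X → J → M) :
    𝔼 m, uPr (fun x => ∃ j, dec (σ m x) j = m) ≤ Fintype.card J / Fintype.card M :=
  calc 𝔼 m, uPr (fun x => ∃ j, dec (σ m x) j = m)
      = 𝔼 m, uPr (fun w => ∃ j, dec w j = m) :=
        expect_congr rfl fun m _ => uPr_comp_equiv (σ m) fun w => ∃ j, dec w j = m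
    _ = 𝔼 w, uPr (fun m => ∃ j, dec w j = m) := expect_uPr_comm _
    _ ≤ Fintype.card J / Fintype.card M :=
        expect_le univ_nonempty fun w _ => uPr_exists_eq_le (dec w)

theorem exists_le_uPr_and_uPr_exists_eq_le [Nonempty M] [Nonempty X] (σ : M → Equiv.Perm X)
    (dec : X → J → M) (G : M × R → Prop) {ε N : ℝ} (hε : 0 ≤ ε) (hN : 0 < N)
    (hG : ε + Fintype.card J / N ≤ uPr G) :
    ∃ m, ε ≤ uPr (fun r => G (m, r)) ∧
      uPr (fun x => ∃ j, dec (σ m x) j = m) ≤ N / Fintype.card M := by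
  set good : M → ℝ := fun m => uPr fun r => G (m, r)
  set listed : M → ℝ := fun m => uPr fun x => ∃ j, dec (σ m x) j = m
  have : (0 : ℝ) < Fintype.card M := mod_cast Fintype.card_pos
  have h_listed : (𝔼 m, listed m) * (Fintype.card M / N) ≤ Fintype.card J / N :=
    calc (𝔼 m, listed m) * (Fintype.card M / N)
        ≤ Fintype.card J / Fintype.card M * (Fintype.card M / N) := by
          gcongr
          exact expect_uPr_exists_eq_le σ dec
      _ = Fintype.card J / N := by field_simp
  have h_avg : ε ≤ 𝔼 m, (good m - listed m * (Fintype.card M / N)) := by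
    rw [expect_sub_distrib, ← expect_mul, ← uPr_prod]
    linarith
  obtain ⟨m, -, hm⟩ := exists_le_of_le_expect univ_nonempty h_avg
  have h_nonneg : 0 ≤ listed m * (Fintype.card M / N) :=
    mul_nonneg (uPr_nonneg _) (by positivity)
  have h_le_one : listed m * (Fintype.card M / N) ≤ 1 := by
    linarith [uPr_le_one fun r => G (m, r)]
  refine ⟨m, by linarith, ?_⟩
  rwa [← le_div_iff₀ (by positivity), one_div_div] at h_le_one

end ListDecoding

/-- The translation `x ↦ e ⊕ x` of the Boolean cube by a fixed word `e`. -/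
def xorPerm {Q : Type*} (e : Q → Bool) : Equiv.Perm (Q → Bool) :=
  Function.Involutive.toPerm (fun x s => xor (e s) (x s)) fun x => by simp

section XorShift

variable {n : ℕ}

/-- The clause obtained from `c` by the substitution `x ↦ e ⊕ x`: the literals on variables where
`e` is `true` change polarity. -/
def BClause.xorShift (e : Fin n → Bool) (c : BClause n) : BClause n :=
  c.map fun l => (l.1, xor (e l.1) l.2)

theorem BClause.eval_xorShift (e : Fin n → Bool) (c : BClause n) (x : Fin n → Bool) :
    (c.xorShift e).eval x = c.eval (xorPerm e x) := by
  have h_literal (l : Fin n × Bool) :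
      (x l.1 == xor (e l.1) l.2) = (xor (e l.1) (x l.1) == l.2) := by
    cases x l.1 <;> cases e l.1 <;> cases l.2 <;> rfl
  simp only [BClause.eval, BClause.xorShift, List.any_map, Function.comp_def, h_literal]
  rfl

/-- The CNF obtained from `φ` by the substitution `x ↦ e ⊕ x`. -/
def BCNF.xorShift (e : Fin n → Bool) (φ : BCNF n) : BCNF n :=
  φ.map (BClause.xorShift e)

theorem BCNF.eval_xorShift (e : Fin n → Bool) (φ : BCNF n) (x : Fin n → Bool) :
    (φ.xorShift e).eval x = φ.eval (xorPerm e x) := by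
  simp only [BCNF.eval, BCNF.xorShift, List.all_map, Function.comp_def, BClause.eval_xorShift]

theorem BCNF.width.xorShift {φ : BCNF n} {q : ℕ} (h : φ.width q) (e : Fin n → Bool) :
    (φ.xorShift e).width q :=
  List.forall_mem_map.2 fun c hc => (List.length_map _).trans_le (h c hc)

end XorShift

/-- Padding with the unsatisfiable CNF `[[]]` turns a disjunction over `J` into one over any
index type with room for `J`. -/
theorem exists_padded_disjunction {n q : ℕ} {J A : Type*} (f : J ↪ A) (F : J → BCNF n)
    (hF : ∀ j, (F j).width q) :
    ∃ C : A → BCNF n, (∀ α, (C α).width q) ∧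
      ∀ x, (∃ α, (C α).eval x = true) ↔ ∃ j, (F j).eval x = true := by
  have h_range (j : J) : Function.extend f F (fun _ => [[]]) (f j) = F j :=
    f.injective.extend_apply F _ j
  have h_off {α : A} (hα : ¬∃ j, f j = α) : Function.extend f F (fun _ => [[]]) α = [[]] :=
    Function.extend_apply' F _ α hα
  refine ⟨Function.extend f F fun _ => [[]], fun α => ?_, fun x => ⟨?_, ?_⟩⟩
  · by_cases hα : ∃ j, f j = α
    · obtain ⟨j, rfl⟩ := hα
      simpa only [h_range] using hF j
    · simp [h_off hα, BCNF.width]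
  · rintro ⟨α, hx⟩
    by_cases hα : ∃ j, f j = α
    · obtain ⟨j, rfl⟩ := hα
      exact ⟨j, by simpa only [h_range] using hx⟩
    · simp [h_off hα, BCNF.eval, BClause.eval] at hx
  · rintro ⟨j, hx⟩
    exact ⟨f j, by simpa only [h_range] using hx⟩

namespace OracleProc

section Transcript

variable {q : ℕ} {I Q : Type*}

/-- The `t`-th query on input `w` when the earlier queries are answered according to the
transcript `b`. -/
def qryAlong (P : OracleProc q I Q) (w : I) (b : Fin q → Bool) (t : Fin q) : Q :=
  P.qry t w (b ∘ Fin.castLE t.isLt.le)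

theorem ans_eq_iff (P : OracleProc q I Q) (D : Q → Bool) (w : I) (b : Fin q → Bool) :
    P.ans D w = b ↔ ∀ t, D (P.qryAlong w b t) = b t := by
  constructor
  · rintro rfl t
    conv_rhs => rw [ans]
    rfl
  · intro h
    funext t
    induction t using WellFoundedLT.induction with
    | ind t ih =>
      rw [ans, ← h t, qryAlong]
      congr 2
      exact funext fun j => ih (Fin.castLE t.isLt.le j) j.isLt

end Transcript

variable {n q : ℕ} {I ι : Type*} [Fintype ι]

/-- The clause over the oracle's bits that excludes `b` as the transcript on input `w`. -/
def transcriptExclusion (P : OracleProc q I (Fin n)) (w : I) (b : Fin q → Bool) : BClause n :=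
  List.ofFn fun t => (P.qryAlong w b t, !b t)

theorem eval_transcriptExclusion (P : OracleProc q I (Fin n)) (w : I) (b : Fin q → Bool)
    (D : Fin n → Bool) : (P.transcriptExclusion w b).eval D = true ↔ P.ans D w ≠ b := by
  simp [BClause.eval, transcriptExclusion, List.any_eq_true, List.mem_ofFn, ans_eq_iff, Bool.eq_not]

/-- The CNF over the oracle's bits stating that the outputs on the inputs `input i` are `m i`:
every transcript leading to a wrong output is excluded. -/
noncomputable def outputCNF (P : OracleProc q I (Fin n)) (input : ι → I) (m : ι → Bool) :
    BCNF n :=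
  (Finset.univ.filter fun ib : ι × (Fin q → Bool) =>
    P.out (input ib.1) ib.2 ≠ m ib.1).toList.map
      fun ib => P.transcriptExclusion (input ib.1) ib.2

theorem width_outputCNF (P : OracleProc q I (Fin n)) (input : ι → I) (m : ι → Bool) :
    (P.outputCNF input m).width q :=
  List.forall_mem_map.2 fun _ _ => (List.length_ofFn).le

theorem eval_outputCNF (P : OracleProc q I (Fin n)) (input : ι → I) (m : ι → Bool)
    (D : Fin n → Bool) :
    (P.outputCNF input m).eval D = true ↔ ∀ i, P.run D (input i) = m i := by
  have h_excluded : (P.outputCNF input m).eval D = true ↔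
      ∀ i b, P.out (input i) b ≠ m i → P.ans D (input i) ≠ b := by
    simp only [BCNF.eval, outputCNF, List.all_eq_true, List.forall_mem_map, Finset.mem_toList,
      Finset.mem_filter, Finset.mem_univ, true_and, Prod.forall, eval_transcriptExclusion]
  rw [h_excluded]
  refine forall_congr' fun i => ⟨fun h => ?_, ?_⟩
  · by_contra h_wrong
    exact h _ h_wrong rfl
  · rintro h b h_wrong rfl
    exact h_wrong h

end OracleProc

theorem natCast_div_two_pow_clog_add_le (L c : ℕ) :
    (L : ℝ) / 2 ^ (Nat.clog 2 L + c) ≤ 1 / 2 ^ c := by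
  have h : (L : ℝ) ≤ 2 ^ Nat.clog 2 L := mod_cast Nat.le_pow_clog one_lt_two L
  rw [div_le_div_iff₀ (by positivity) (by positivity), one_mul, pow_add]
  gcongr

theorem deterministic_decoder_to_depth3_circuit_general {ι J : Type*} [Fintype ι] [DecidableEq ι]
    [Fintype J] {n q t a : ℕ} {β δ ε : ℝ} (Enc : (ι → Bool) → (Fin n → Bool))
    (Dbar : OracleProc q (ι × J) (Fin n)) (hε : 0 ≤ ε)
    (hDbar : ε + Fintype.card J / 2 ^ a ≤ uPr fun mr : (ι → Bool) × Restr n t =>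
      bPr β (fun z => ∃ j, ∀ i,
        Dbar.run (fun s => xor (Enc mr.1 s) (Fill mr.2.1 mr.2.2 z s)) (i, j) = mr.1 i) ≥ δ) :
    ∃ C : (Fin a → Bool) → BCNF n,
      (∀ α, (C α).width q) ∧
      uPr (fun x => ∃ α, (C α).eval x = true) ≤ (2 : ℝ) ^ (-((Fintype.card ι : ℝ) - a)) ∧
      uPr (fun ρ : Restr n t =>
        bPr β (fun z => ∃ α, (C α).eval (Fill ρ.1 ρ.2 z) = true) ≥ δ) ≥ ε := by
  have h_card : Fintype.card J ≤ Fintype.card (Fin a → Bool) := by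
    have h_ratio : (Fintype.card J : ℝ) / 2 ^ a ≤ 1 := by linarith [hDbar.trans (uPr_le_one _)]
    rw [div_le_one (by positivity)] at h_ratio
    simpa using (mod_cast h_ratio : Fintype.card J ≤ 2 ^ a)
  obtain ⟨pad⟩ := Function.Embedding.nonempty_of_card_le h_card
  obtain ⟨m, h_good, h_listed⟩ := exists_le_uPr_and_uPr_exists_eq_le (fun m => xorPerm (Enc m))
    (fun w j i => Dbar.run w (i, j)) _ hε (by positivity) hDbar
  obtain ⟨C, h_width, h_eval⟩ := exists_padded_disjunction pad
    (fun j => (Dbar.outputCNF (fun i => (i, j)) m).xorShift (Enc m))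
    (fun j => (Dbar.width_outputCNF _ m).xorShift (Enc m))
  simp only [BCNF.eval_xorShift, OracleProc.eval_outputCNF] at h_eval
  refine ⟨C, h_width, ?_, ?_⟩
  · have h_bound : (2 : ℝ) ^ (-((Fintype.card ι : ℝ) - a)) =
        2 ^ a / (Fintype.card (ι → Bool) : ℝ) := by
      rw [neg_sub, Real.rpow_sub two_pos, Real.rpow_natCast, Real.rpow_natCast]
      simp
    simp only [h_eval, h_bound]
    simpa only [funext_iff] using h_listed
  · simp only [h_eval]
    exact h_good

/-- Claim 5.8: from a deterministic decoder that succeeds on typical messages and restrictions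
one obtains an OR of `2^a` many `q`-CNFs (with `a = ⌈log₂ L⌉ + 100`) that is rarely one on
uniform inputs, yet after a random restriction is non-negligibly often one on `1/3`-biased
inputs. -/
theorem deterministic_decoder_to_depth3_circuit (ℓ n L q pn a : ℕ) (p : ℝ)
    (Enc : (Fin (2 ^ ℓ) → Bool) → (Fin n → Bool))
    (hp : 0 < p) (hp1 : p ≤ 1)
    (hpn : (pn : ℝ) = p * (n : ℝ))
    (ha : a = Nat.clog 2 L + 100)
    (Dbar : OracleProc q (Fin (2 ^ ℓ) × Fin L) (Fin n))
    (hDbar : uPr (fun mr : (Fin (2 ^ ℓ) → Bool) × Restr n pn =>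
        bPr (1 / 3) (fun z : Fin pn → Bool =>
            ∃ j : Fin L, ∀ i : Fin (2 ^ ℓ),
              OracleProc.run Dbar
                (fun s => xor (Enc mr.1 s) (Fill mr.2.1 mr.2.2 z s)) (i, j) =
                mr.1 i) ≥ 0.01) ≥ 0.51) :
    ∃ C : (Fin a → Bool) → BCNF n,
      (∀ α, BCNF.width (C α) q) ∧
      uPr (fun x : Fin n → Bool => ∃ α, BCNF.eval (C α) x = true) ≤
          (2 : ℝ) ^ (-((2 : ℝ) ^ (ℓ : ℕ) - (a : ℝ))) ∧
      uPr (fun ρ : Restr n pn =>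
          bPr (1 / 3) (fun z : Fin pn → Bool =>
              ∃ α, BCNF.eval (C α) (Fill ρ.1 ρ.2 z) = true) ≥ 0.01) ≥ 0.01 := by
  have h_slack : (0.01 : ℝ) + Fintype.card (Fin L) / 2 ^ a ≤ 0.51 := by
    rw [Fintype.card_fin, ha]
    linarith [natCast_div_two_pow_clog_add_le L 100]
  simpa only [Fintype.card_fin, Nat.cast_pow, Nat.cast_ofNat] using
    deterministic_decoder_to_depth3_circuit_general Enc Dbar (by norm_num) (h_slack.trans hDbar)
end
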